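/- arXiv:math/0502478 — 2 statements merged into one kernel-verified Lean document; each statement's English description precedes it below -/
import Mathlib

section
/- Let k be an algebraically closed field of characteristic zero, q a finite-dimensional Lie algebra over k, V a finite-dimensional q-module, and v ∈ V. Then min_{x ∈ V} dim q_x ≤ min_{w ∈ V} dim {s ∈ q : s·v = 0 and s·w ∈ q·v}; equivalently, ind(q, V*) ≤ ind(q_v, (V/q·v)*) (Vinberg's inequality). -/
/-!
Vinberg's inequality: for a finite-dimensional Lie algebra `q` over an algebraically
closed field `k` of characteristic zero, a finite-dimensional `q`-module `V` and `v ∈ V`,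

  `min_{x ∈ V} dim q_x ≤ min_{w ∈ V} dim {s ∈ q : s·v = 0 ∧ s·w ∈ q·v}`;

equivalently, `ind(q, V*) ≤ ind(q_v, (V/q·v)*)`.
-/

open Module

namespace Stmt

variable (k : Type*) [Field k]
variable (L : Type*) [LieRing L] [LieAlgebra k L]
variable (M : Type*) [AddCommGroup M] [Module k M] [LieRingModule L M] [LieModule k L M]

/-- The linear map `s ↦ s·v = ⁅s, v⁆`. -/
def actAt (v : M) : L →ₗ[k] M where
  toFun s := ⁅s, v⁆
  map_add' a b := add_lie a b v
  map_smul' c a := smul_lie c a v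

/-- The tangent space `q·v = {s·v : s ∈ q}` of the orbit of `v`. -/
def orbit (v : M) : Submodule k M := LinearMap.range (actAt k L M v)

/-- The stabiliser subalgebra `q_v = {s ∈ q : s·v = 0}`. -/
def stab (v : M) : LieSubalgebra k L where
  carrier := {s | ⁅s, v⁆ = 0}
  add_mem' := by intro a b ha hb; simp only [Set.mem_setOf_eq, add_lie] at *; rw [ha, hb, add_zero]
  zero_mem' := by simp
  smul_mem' := by intro c a ha; simp only [Set.mem_setOf_eq, smul_lie] at *; rw [ha, smul_zero]
  lie_mem' := by
    intro a b ha hb; simp only [Set.mem_setOf_eq, lie_lie] at *; rw [ha, hb]; simp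

/-- The index of the Lie module `M`:
`ind(q, M) = dim M − max_{ξ ∈ M*} dim q·ξ`, where the coadjoint action on the dual module
is `(s·ξ)(m) = −ξ(s·m)`. -/
noncomputable def lieIndex : ℕ :=
  finrank k M - ⨆ ξ : Module.Dual k M, finrank k (orbit k L (Module.Dual k M) ξ)

/-- `{s ∈ q : s·v = 0 and s·w ∈ q·v}`. -/
def relStab (v w : M) : Submodule k L where
  carrier := {s | ⁅s, v⁆ = 0 ∧ ⁅s, w⁆ ∈ orbit k L M v}
  add_mem' := by
    rintro a b ⟨ha1, ha2⟩ ⟨hb1, hb2⟩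
    exact ⟨by rw [add_lie, ha1, hb1, add_zero], by rw [add_lie]; exact add_mem ha2 hb2⟩
  zero_mem' := by constructor <;> simp
  smul_mem' := by
    rintro c a ⟨ha1, ha2⟩
    exact ⟨by rw [smul_lie, ha1, smul_zero], by rw [smul_lie]; exact Submodule.smul_mem _ c ha2⟩

/-- The orbit `q·v` as a Lie submodule over the stabiliser `q_v`. -/
def orbitLS (v : M) : LieSubmodule k ↥(stab k L M v) M :=
  { orbit k L M v with
    lie_mem := by
      rintro x m ⟨t, rfl⟩
      show ⁅(x : L), _⁆ ∈ orbit k L M v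
      have hx : ⁅(x : L), v⁆ = 0 := x.2
      have : ⁅(x : L), (actAt k L M v) t⁆ = actAt k L M v ⁅(x : L), t⁆ := by
        show ⁅(x : L), ⁅t, v⁆⁆ = ⁅⁅(x : L), t⁆, v⁆
        rw [lie_lie, hx, lie_zero, sub_zero]
      rw [this]
      exact ⟨_, rfl⟩ }

/-! Let `A, B : E → F` be linear and let `C : ker A → F ⧸ range A` be induced by `B`. Sections of
`A` and of `C` over their ranges give an injective map `(a, c) ↦ a + B (τ c)` on
`range A × range C`. Rescaling the second section by `t⁻¹` turns `A + t B` into a perturbation of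
this map that is linear in `t`, hence still injective for all but finitely many `t`, so
`rank A + rank C ≤ rank (A + t B)` for some `t`. With `A s = s·v` and `B s = s·w` this reads
`dim q·v + dim q_v·w̄ ≤ dim q·(v + t w)`, where `w̄` is the class of `w` in `V/q·v`. -/

section LinearPencil

variable {k}
variable {E F : Type*} [AddCommGroup E] [Module k E] [AddCommGroup F] [Module k F]

theorem finite_setOf_not_injective_add_smul [FiniteDimensional k E] {f : E →ₗ[k] F}
    (hf : Function.Injective f) (g : E →ₗ[k] F) :
    {t : k | ¬ Function.Injective (f + t • g)}.Finite := by
  obtain ⟨p, hp⟩ := f.exists_leftInverse_of_injective (LinearMap.ker_eq_bot.2 hf)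
  refine ((Module.End.finite_hasEigenvalue (p ∘ₗ g)).preimage
    (neg_injective.comp inv_injective).injOn).subset fun t ht => ?_
  obtain ⟨x, hx, hx0⟩ : ∃ x, f x + t • g x = 0 ∧ x ≠ 0 := by
    simpa [injective_iff_map_eq_zero] using ht
  have hpx : x + t • p (g x) = 0 := by
    have hpf : p (f x) = x := LinearMap.congr_fun hp x
    rw [← map_zero p, ← hx, map_add, map_smul, hpf]
  have ht0 : t ≠ 0 := by
    rintro rfl
    exact hx0 (by simpa using hpx)
  refine Module.End.hasEigenvalue_of_hasEigenvector (x := x)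
    ⟨Module.End.mem_eigenspace_iff.2 ?_, hx0⟩
  calc p (g x) = t⁻¹ • t • p (g x) := (inv_smul_smul₀ ht0 _).symm
    _ = t⁻¹ • -x := by rw [eq_neg_of_add_eq_zero_right hpx]
    _ = -t⁻¹ • x := by rw [smul_neg, neg_smul]

theorem exists_finrank_add_le_finrank_range_add_smul [Infinite k] {U W : Type*} [AddCommGroup U]
    [Module k U] [AddCommGroup W] [Module k W] [FiniteDimensional k U] [FiniteDimensional k W]
    {A B : E →ₗ[k] F} (hA : A.HasFiniteRange) (hB : B.HasFiniteRange) {σ : U →ₗ[k] E}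
    {τ : W →ₗ[k] E} (hτ : A ∘ₗ τ = 0)
    (hinj : Function.Injective ((A ∘ₗ σ).coprod (B ∘ₗ τ))) :
    ∃ t : k, finrank k U + finrank k W ≤ finrank k (LinearMap.range (A + t • B)) := by
  set f : U × W →ₗ[k] F := (A ∘ₗ σ).coprod (B ∘ₗ τ)
  let g : U × W →ₗ[k] F := (B ∘ₗ σ).coprod 0
  obtain ⟨t, ht⟩ := ((finite_setOf_not_injective_add_smul hinj g).insert 0).exists_notMem
  obtain ⟨ht0, hfg⟩ : t ≠ 0 ∧ Function.Injective (f + t • g) := by simpa using ht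
  let h : U × W →ₗ[k] E := σ.coprod (t⁻¹ • τ)
  have hfactor : f + t • g = (A + t • B) ∘ₗ h := by
    refine LinearMap.ext fun ⟨a, c⟩ => ?_
    have hAτ : A (τ c) = 0 := LinearMap.congr_fun hτ c
    simp only [f, g, h, LinearMap.add_apply, LinearMap.smul_apply, LinearMap.comp_apply,
      LinearMap.coprod_apply, LinearMap.zero_apply, map_add, map_smul, hAτ, smul_add, smul_zero,
      inv_smul_smul₀ ht0]
    abel
  have : FiniteDimensional k (LinearMap.range (A + t • B)) :=
    Module.Finite.of_fg (hA.add (hB.smul t)).fg_range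
  refine ⟨t, ?_⟩
  calc finrank k U + finrank k W
      = finrank k (LinearMap.range (f + t • g)) := by
        rw [LinearMap.finrank_range_of_inj hfg, Module.finrank_prod]
    _ ≤ finrank k (LinearMap.range (A + t • B)) :=
        Submodule.finrank_mono (hfactor ▸ LinearMap.range_comp_le_range h (A + t • B))

theorem exists_finrank_range_add_finrank_range_comp_le [Infinite k] {K Q : Type*} [AddCommGroup K]
    [Module k K] [AddCommGroup Q] [Module k Q] {A B : E →ₗ[k] F} (hA : A.HasFiniteRange)
    (hB : B.HasFiniteRange) {i : K →ₗ[k] E} {π : F →ₗ[k] Q} (hi : A ∘ₗ i = 0)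
    (hπ : π ∘ₗ A = 0) :
    ∃ t : k, finrank k (LinearMap.range A) + finrank k (LinearMap.range (π ∘ₗ B ∘ₗ i)) ≤
      finrank k (LinearMap.range (A + t • B)) := by
  set C : K →ₗ[k] Q := π ∘ₗ B ∘ₗ i
  have : FiniteDimensional k (LinearMap.range A) := Module.Finite.of_fg hA.fg_range
  have : FiniteDimensional k (LinearMap.range C) :=
    Module.Finite.of_fg ((hB.comp_right i).comp_left π).fg_range
  obtain ⟨σ, hσ⟩ := A.rangeRestrict.exists_rightInverse_of_surjective A.range_rangeRestrict
  obtain ⟨τ, hτ⟩ := C.rangeRestrict.exists_rightInverse_of_surjective C.range_rangeRestrict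
  have hAσ (a : LinearMap.range A) : A (σ a) = a :=
    congr_arg Subtype.val (LinearMap.congr_fun hσ a)
  have hCτ (c : LinearMap.range C) : π (B (i (τ c))) = c :=
    congr_arg Subtype.val (LinearMap.congr_fun hτ c)
  have hAiτ : A ∘ₗ i ∘ₗ τ = 0 := by rw [← LinearMap.comp_assoc, hi, LinearMap.zero_comp]
  refine exists_finrank_add_le_finrank_range_add_smul hA hB (σ := σ) hAiτ
    ((injective_iff_map_eq_zero _).2 ?_)
  rintro ⟨a, c⟩ (h : A (σ a) + B (i (τ c)) = 0)
  have hc : c = 0 := by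
    have hπA : π (A (σ a)) = 0 := LinearMap.congr_fun hπ (σ a)
    have hπh := congr_arg π h
    rw [map_add, hπA, hCτ, zero_add, map_zero] at hπh
    exact Subtype.ext hπh
  subst hc
  have ha : a = 0 := Subtype.ext (by simpa [hAσ] using h)
  rw [ha, Prod.mk_zero_zero]

end LinearPencil

theorem actAt_add_smul (v w : M) (t : k) :
    actAt k L M (v + t • w) = actAt k L M v + t • actAt k L M w := by
  ext s
  simp [actAt]

theorem orbit_quotient_mk (v w : M) :
    orbit k (stab k L M v) (M ⧸ orbitLS k L M v) (LieSubmodule.Quotient.mk w) =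
      LinearMap.range
        ((orbit k L M v).mkQ ∘ₗ actAt k L M w ∘ₗ (stab k L M v).toSubmodule.subtype) :=
  rfl

theorem exists_finrank_orbit_add_finrank_orbit_quotient_le [Infinite k] {v w : M}
    (hv : (actAt k L M v).HasFiniteRange) (hw : (actAt k L M w).HasFiniteRange) :
    ∃ x : M, finrank k (orbit k L M v) + finrank k (orbit k (stab k L M v)
      (M ⧸ orbitLS k L M v) (LieSubmodule.Quotient.mk w)) ≤ finrank k (orbit k L M x) := by
  have hstab : actAt k L M v ∘ₗ (stab k L M v).toSubmodule.subtype = 0 :=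
    LinearMap.ext fun s => s.2
  have hquot : (orbit k L M v).mkQ ∘ₗ actAt k L M v = 0 := LinearMap.range_mkQ_comp _
  obtain ⟨t, ht⟩ := exists_finrank_range_add_finrank_range_comp_le hv hw hstab hquot
  refine ⟨v + t • w, ?_⟩
  rwa [orbit_quotient_mk, orbit.eq_def k L M (v + t • w), actAt_add_smul]

section Stabilisers

variable [FiniteDimensional k L]

theorem finrank_orbit_add_finrank_stab (x : M) :
    finrank k (orbit k L M x) + finrank k (stab k L M x) = finrank k L :=
  (actAt k L M x).finrank_range_add_finrank_ker

theorem finrank_orbit_quotient_add_finrank_relStab (v w : M) :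
    finrank k (orbit k (stab k L M v) (M ⧸ orbitLS k L M v) (LieSubmodule.Quotient.mk w)) +
      finrank k (relStab k L M v w) = finrank k (stab k L M v) := by
  have hle : relStab k L M v w ≤ (stab k L M v).toSubmodule := fun _ hs => hs.1
  have hker : LinearMap.ker (actAt k (stab k L M v) (M ⧸ orbitLS k L M v)
      (LieSubmodule.Quotient.mk w)) =
      (relStab k L M v w).comap (stab k L M v).toSubmodule.subtype := by
    ext s
    exact (LieSubmodule.Quotient.mk_eq_zero (N := orbitLS k L M v) (m := ⁅(s : L), w⁆)).trans
      ⟨fun h => ⟨s.2, h⟩, fun h => h.2⟩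
  rw [← (Submodule.comapSubtypeEquivOfLe hle).finrank_eq, ← hker]
  exact LinearMap.finrank_range_add_finrank_ker _

theorem iInf_finrank_stab_le_iInf_finrank_relStab [Infinite k] (v : M) :
    (⨅ x : M, finrank k (stab k L M x)) ≤ ⨅ w : M, finrank k (relStab k L M v w) := by
  refine le_ciInf fun w => ?_
  obtain ⟨x, hx⟩ := exists_finrank_orbit_add_finrank_orbit_quotient_le k L M
    (v := v) (w := w) .of_finite_dom .of_finite_dom
  refine (ciInf_le (OrderBot.bddBelow _) x).trans ?_
  have hx_stab := finrank_orbit_add_finrank_stab k L M x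
  have hv_stab := finrank_orbit_add_finrank_stab k L M v
  have hw_relStab := finrank_orbit_quotient_add_finrank_relStab k L M v w
  omega

end Stabilisers

section Index

variable [FiniteDimensional k M]

theorem bddAbove_range_finrank_orbit :
    BddAbove (Set.range fun x : M => finrank k (orbit k L M x)) :=
  ⟨finrank k M, by rintro _ ⟨x, rfl⟩; exact Submodule.finrank_le _⟩

theorem finrank_orbit_evalEquiv (x : M) :
    finrank k (orbit k L (Dual k (Dual k M)) (evalEquiv k M x)) = finrank k (orbit k L M x) := by
  have hact : actAt k L (Dual k (Dual k M)) (evalEquiv k M x) =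
      (evalEquiv k M).toLinearMap ∘ₗ actAt k L M x := by
    ext s f
    simp [actAt]
  rw [orbit, hact, LinearMap.range_comp]
  exact LinearEquiv.finrank_map_eq (evalEquiv k M) _

theorem lieIndex_dual :
    lieIndex k L (Dual k M) = finrank k M - ⨆ x : M, finrank k (orbit k L M x) := by
  rw [lieIndex, Subspace.dual_finrank_eq,
    ← (evalEquiv k M).surjective.iSup_congr _ (finrank_orbit_evalEquiv k L M)]

theorem finrank_orbit_add_iSup_finrank_orbit_quotient_le [Infinite k] (v : M) :
    finrank k (orbit k L M v) +
      ⨆ y : M ⧸ orbitLS k L M v, finrank k (orbit k (stab k L M v) (M ⧸ orbitLS k L M v) y) ≤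
    ⨆ x : M, finrank k (orbit k L M x) := by
  have hbdd := bddAbove_range_finrank_orbit k L M
  rw [← Nat.le_sub_iff_add_le' (le_ciSup hbdd v)]
  refine ciSup_le fun y => Nat.le_sub_of_add_le' ?_
  obtain ⟨w, rfl⟩ := LieSubmodule.Quotient.surjective_mk' (orbitLS k L M v) y
  obtain ⟨x, hx⟩ := exists_finrank_orbit_add_finrank_orbit_quotient_le k L M
    (v := v) (w := w) .of_isNoetherian_rng .of_isNoetherian_rng
  exact hx.trans (le_ciSup hbdd x)

theorem lieIndex_dual_le_lieIndex_dual_quotient [Infinite k] (v : M) :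
    lieIndex k L (Dual k M) ≤ lieIndex k (stab k L M v) (Dual k (M ⧸ orbitLS k L M v)) := by
  have hquot : finrank k (M ⧸ orbitLS k L M v) = finrank k M - finrank k (orbit k L M v) :=
    (orbit k L M v).finrank_quotient
  rw [lieIndex_dual, lieIndex_dual, hquot, Nat.sub_sub]
  exact Nat.sub_le_sub_left (finrank_orbit_add_iSup_finrank_orbit_quotient_le k L M v) _

end Index

theorem vinberg_inequality_general [Infinite k] (v : M) :
    (FiniteDimensional k L →
      (⨅ x : M, finrank k (stab k L M x)) ≤ ⨅ w : M, finrank k (relStab k L M v w)) ∧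
    (FiniteDimensional k M →
      lieIndex k L (Dual k M) ≤
        lieIndex k (stab k L M v) (Dual k (M ⧸ orbitLS k L M v))) :=
  ⟨fun _ => iInf_finrank_stab_le_iInf_finrank_relStab k L M v,
    fun _ => lieIndex_dual_le_lieIndex_dual_quotient k L M v⟩

/-- **Vinberg's inequality.** -/
theorem vinberg_inequality [IsAlgClosed k] [CharZero k]
    [FiniteDimensional k L] [FiniteDimensional k M] (v : M) :
    ((⨅ x : M, finrank k (stab k L M x)) ≤ ⨅ w : M, finrank k (relStab k L M v w)) ∧
    lieIndex k L (Module.Dual k M) ≤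
      lieIndex k ↥(stab k L M v) (Module.Dual k (M ⧸ orbitLS k L M v)) :=
  have : Infinite k := CharZero.infinite k
  (vinberg_inequality_general k L M v).imp (· inferInstance) (· inferInstance)

end Stmt
end

section
/- Let k be an algebraically closed field of characteristic zero, V a 2n-dimensional k-vector space with a nondegenerate alternating bilinear form B, and V = V₊ ⊕ V₋ a decomposition into two Lagrangian (n-dimensional totally isotropic) subspaces. Let σ ∈ GL(V) be the involution with σ|_{V₊} = id and σ|_{V₋} = −id, and let e ∈ End(V) be a nilpotent endomorphism with B(e·v,w) + B(v,e·w) = 0 for all v,w (e ∈ sp(V,B)) and σeσ = −e (so e maps V₊ into V₋ and V₋ into V₊). Set m := dim Ker(e). Then there exist cyclic vectors w₁,…,w_m ∈ V and integers d₁,…,d_m ≥ 0 with e^{d_i+1}·w_i = 0 and {e^s·w_i : 1 ≤ i ≤ m, 0 ≤ s ≤ d_i} a basis of V, such that: (i) there is an involution i ↦ i* of {1,…,m} with d_i = d_{i*}, with i = i* if and only if d_i is odd, and with B(V_i, V_j) = 0 whenever j ∉ {i, i*}; and (ii) σ(w_i) = ±w_i for every i. -/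
/-!
Adapted cyclic vectors for a nilpotent `e ∈ sp(V,B)` anticommuting with the involution `σ`
attached to a Lagrangian decomposition `V = V₊ ⊕ V₋` (the setting of the symmetric pair
`(sp_{2n}, gl_n)`): the cyclic vectors may be chosen to be `σ`-eigenvectors, with an
involution `i ↦ i*` on the indices such that `d_i = d_{i*}`, `i = i*` iff `d_i` is odd,
and `B(V_i, V_j) = 0` whenever `j ∉ {i, i*}`.
-/

open Module

/-!
For `d : ℕ` the form `C x y = B (e ^ d x) y` is alternating when `d` is even and symmetric when `d`
is odd, and `σ` satisfies `C (σ x) (σ y) = C y x`. Let `W` be a nonzero nondegenerate subspace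
stable under `e` and `σ`, and choose `d` with `e ^ (d + 1) = 0 ≠ e ^ d` on `W`, so that `C ≠ 0`
on `W`. Replacing vectors `x` by `x ± σ x` one finds eigenvectors `x, y ∈ W` of `σ` with
`C x y ≠ 0`, and `x = y` is possible when `d` is odd. The Gram matrix of the `e`-strings through
these one or two vectors is antitriangular with invertible diagonal, so the strings are
independent and span a nondegenerate subspace. Its orthogonal complement is again nondegenerate
and stable, and such blocks are split off until they fill `V`.
-/

theorem neg_pow_eq_or_eq_neg {R : Type*} [Monoid R] [HasDistribNeg R] (a : R) (n : ℕ) :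
    (-a) ^ n = a ^ n ∨ (-a) ^ n = -a ^ n :=
  n.even_or_odd.imp (fun h => h.neg_pow a) fun h => h.neg_pow a

section BilinearForms

variable {R M : Type*} [CommRing R] [AddCommGroup M] [Module R M] {B : LinearMap.BilinForm R M}

theorem isAdjointPair_pow {f g : End R M} (h : LinearMap.IsAdjointPair B B f g) (n : ℕ) :
    LinearMap.IsAdjointPair B B (f ^ n : End R M) (g ^ n : End R M) := by
  induction n with
  | zero => exact LinearMap.isAdjointPair_one
  | succ n ih => rw [pow_succ f, pow_succ' g]; exact ih.mul h

theorem pow_apply_eq_zero_iff {e : End R M} (he : B.IsSkewAdjoint e) (n : ℕ) {x y : M} :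
    B ((e ^ n) x) y = 0 ↔ B x ((e ^ n) y) = 0 := by
  rw [isAdjointPair_pow (g := -e) he n x y]
  rcases neg_pow_eq_or_eq_neg e n with h | h <;> simp [h]

theorem pow_apply_swap (hB : B.IsAlt) {e : End R M} (he : B.IsSkewAdjoint e) (n : ℕ) (x y : M) :
    B ((e ^ n) y) x = -B (((-e) ^ n) x) y := by
  rw [hB.neg_eq]
  exact isAdjointPair_pow (g := -e) he n y x

theorem pow_apply_involution (hB : B.IsAlt) {σ e : End R M} (hσ : Function.Involutive σ)
    (hσB : B.IsSkewAdjoint σ) (he : B.IsSkewAdjoint e) (hσe : SemiconjBy σ e (-e)) (n : ℕ)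
    (x y : M) : B ((e ^ n) (σ x)) (σ y) = B ((e ^ n) y) x := by
  have hσpow : σ ((e ^ n) (σ x)) = ((-e) ^ n) x := by
    rw [← End.mul_apply, (hσe.pow_right n).eq, End.mul_apply, hσ]
  rw [pow_apply_swap hB he n x y, ← hσpow, hσB, Pi.neg_apply, map_neg, neg_neg]

theorem orthogonal_mem_invtSubmodule {f : End R M} (hf : B.IsSkewAdjoint f) {U : Submodule R M}
    (hU : U ∈ f.invtSubmodule) : B.orthogonal U ∈ f.invtSubmodule := by
  intro x hx y hy
  have hfy : B (f y) x = 0 := hx (f y) (hU hy)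
  rwa [hf, Pi.neg_apply, map_neg, neg_eq_zero] at hfy

theorem disjoint_sup_orthogonal_sup {U X : Submodule R M} (hXU : X ≤ B.orthogonal U)
    (hU : Disjoint U (B.orthogonal U)) (hX : Disjoint X (B.orthogonal X)) :
    Disjoint (U ⊔ X) (B.orthogonal (U ⊔ X)) := by
  have hinf : (X ⊔ U) ⊓ B.orthogonal U = X := by
    rw [sup_inf_assoc_of_le U hXU, hU.eq_bot, sup_bot_eq]
  rw [disjoint_iff_inf_le, ← hX.eq_bot]
  refine le_inf ?_ (inf_le_right.trans (LinearMap.BilinForm.orthogonal_le le_sup_right))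
  calc (U ⊔ X) ⊓ B.orthogonal (U ⊔ X) ≤ (X ⊔ U) ⊓ B.orthogonal U :=
        inf_le_inf (sup_comm U X).le (LinearMap.BilinForm.orthogonal_le le_sup_left)
    _ = X := hinf

theorem exists_apply_ne_zero_of_disjoint_orthogonal (hB : B.IsRefl) {W : Submodule R M}
    (hW : Disjoint W (B.orthogonal W)) {x : M} (hxW : x ∈ W) (hx : x ≠ 0) :
    ∃ y ∈ W, B x y ≠ 0 := by
  by_contra! h
  exact hx (Submodule.disjoint_def.1 hW x hxW fun y hy => hB x y (h y hy))

variable {ι : Type*} [Fintype ι] {v : ι → M}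

theorem linearIndependent_of_gram
    (hv : ∀ a : ι → R, (∀ j, B (∑ i, a i • v i) (v j) = 0) → a = 0) :
    LinearIndependent R v :=
  Fintype.linearIndependent_iff.2 fun a ha => congrFun (hv a fun j => by simp [ha])

theorem disjoint_span_orthogonal_of_gram (hB : B.IsRefl)
    (hv : ∀ a : ι → R, (∀ j, B (∑ i, a i • v i) (v j) = 0) → a = 0) :
    Disjoint (Submodule.span R (Set.range v)) (B.orthogonal (Submodule.span R (Set.range v))) := by
  rw [Submodule.disjoint_def]
  intro x hx hxo
  obtain ⟨a, rfl⟩ := (Submodule.mem_span_range_iff_exists_fun R).1 hx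
  have ha : a = 0 := hv a fun j => hB _ _ (hxo (v j) (Submodule.subset_span ⟨j, rfl⟩))
  simp [ha]

end BilinearForms

section JordanBases

variable {k V : Type*} [Field k] [AddCommGroup V] [Module k V]

/-- The concatenated strings `w i, e (w i), …, e ^ d i (w i)` through the vectors `w i`. -/
def cyclicFamily {ι : Type*} (e : End k V) (w : ι → V) (d : ι → ℕ) :
    (Σ i, Fin (d i + 1)) → V :=
  fun p => (e ^ (p.2 : ℕ)) (w p.1)

/-- The vectors `w i` are cyclic (Jordan) vectors of `e` on the subspace `U`: their strings, the
one through `w i` having length `d i + 1`, form a basis of `U`. -/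
structure IsJordanBasis {ι : Type*} (e : End k V) (U : Submodule k V) (w : ι → V) (d : ι → ℕ) :
    Prop where
  pow_apply_eq_zero : ∀ i, (e ^ (d i + 1)) (w i) = 0
  linearIndependent : LinearIndependent k (cyclicFamily e w d)
  span_eq : Submodule.span k (Set.range (cyclicFamily e w d)) = U

/-- A Jordan basis of `U` adapted to the form `B` and the involution `σ`: the cyclic vectors are
eigenvectors of `σ`, and the cyclic subspaces are pairwise orthogonal except for the pairs matched
by the involution `star` of the indices, whose fixed points are the `i` with `d i` odd. -/
structure IsAdaptedJordanBasis {ι : Type*} (B : LinearMap.BilinForm k V) (σ e : End k V)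
    (U : Submodule k V) (w : ι → V) (d : ι → ℕ) (star : ι → ι) : Prop
    extends IsJordanBasis e U w d where
  star_involutive : Function.Involutive star
  height_star : ∀ i, d (star i) = d i
  star_eq_self_iff : ∀ i, star i = i ↔ Odd (d i)
  apply_eq_zero : ∀ i j, j ≠ i → j ≠ star i → ∀ s t, s ≤ d i → t ≤ d j →
    B ((e ^ s) (w i)) ((e ^ t) (w j)) = 0
  eigenvector : ∀ i, σ (w i) = w i ∨ σ (w i) = -w i

/-- The subspace `U` has an adapted Jordan basis with some finite index type. -/
def HasAdaptedJordanBasis (B : LinearMap.BilinForm k V) (σ e : End k V) (U : Submodule k V) :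
    Prop :=
  ∃ (ι : Type) (_ : Finite ι) (w : ι → V) (d : ι → ℕ) (star : ι → ι),
    IsAdaptedJordanBasis B σ e U w d star

variable {B : LinearMap.BilinForm k V} {σ e : End k V} {U X : Submodule k V}

theorem pow_apply_mem_span_cyclicFamily {ι : Type*} (w : ι → V) {d : ι → ℕ} {i : ι} {s : ℕ}
    (hs : s ≤ d i) : (e ^ s) (w i) ∈ Submodule.span k (Set.range (cyclicFamily e w d)) :=
  Submodule.subset_span ⟨⟨i, s, Nat.lt_succ_of_le hs⟩, rfl⟩

theorem span_cyclicFamily_le {ι : Type*} {w : ι → V} (d : ι → ℕ) (hU : U ∈ e.invtSubmodule)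
    (hw : ∀ i, w i ∈ U) : Submodule.span k (Set.range (cyclicFamily e w d)) ≤ U := by
  rw [Submodule.span_le]
  rintro _ ⟨p, rfl⟩
  exact Module.End.pow_apply_mem_of_forall_mem _ hU _ (hw p.1)

namespace IsJordanBasis

variable {ι ι' : Type*} {w : ι → V} {d : ι → ℕ} {w' : ι' → V} {d' : ι' → ℕ}

theorem pow_apply_mem (h : IsJordanBasis e U w d) {i : ι} {s : ℕ} (hs : s ≤ d i) :
    (e ^ s) (w i) ∈ U :=
  h.span_eq ▸ pow_apply_mem_span_cyclicFamily w hs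

theorem mem_invtSubmodule (h : IsJordanBasis e U w d) : U ∈ e.invtSubmodule := by
  rw [End.mem_invtSubmodule]
  nth_rw 1 [← h.span_eq]
  rw [Submodule.span_le]
  rintro _ ⟨⟨i, s, hs⟩, rfl⟩
  change e ((e ^ s) (w i)) ∈ U
  rw [← End.mul_apply, ← pow_succ']
  rcases (Nat.lt_succ_iff.1 hs).lt_or_eq with hlt | rfl
  · exact h.pow_apply_mem hlt
  · exact h.pow_apply_eq_zero i ▸ U.zero_mem

theorem sup (hU : IsJordanBasis e U w d) (hX : IsJordanBasis e X w' d') (hUX : Disjoint U X) :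
    IsJordanBasis e (U ⊔ X) (Sum.elim w w') (Sum.elim d d') := by
  let E : (Σ i, Fin (Sum.elim d d' i + 1)) ≃ (Σ i, Fin (d i + 1)) ⊕ Σ i, Fin (d' i + 1) :=
    Equiv.sumSigmaDistrib fun i => Fin (Sum.elim d d' i + 1)
  have hE : cyclicFamily e (Sum.elim w w') (Sum.elim d d') =
      Sum.elim (cyclicFamily e w d) (cyclicFamily e w' d') ∘ E := by
    funext p
    rcases p with ⟨i | i, s⟩ <;> rfl
  refine ⟨Sum.rec hU.pow_apply_eq_zero hX.pow_apply_eq_zero, ?_, ?_⟩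
  · rw [hE, linearIndependent_equiv]
    exact hU.linearIndependent.sum_type hX.linearIndependent (by rwa [hU.span_eq, hX.span_eq])
  · rw [hE, E.surjective.range_comp, Set.Sum.elim_range, Submodule.span_union, hU.span_eq,
      hX.span_eq]

theorem reindex (h : IsJordanBasis e U w d) (E : ι' ≃ ι) : IsJordanBasis e U (w ∘ E) (d ∘ E) := by
  let F : (Σ i, Fin ((d ∘ E) i + 1)) ≃ Σ i, Fin (d i + 1) :=
    Equiv.sigmaCongrLeft (β := fun i => Fin (d i + 1)) E
  have hF : cyclicFamily e (w ∘ E) (d ∘ E) = cyclicFamily e w d ∘ F := rfl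
  refine ⟨fun i => h.pow_apply_eq_zero (E i), ?_, ?_⟩
  · rw [hF, linearIndependent_equiv]
    exact h.linearIndependent
  · rw [hF, F.surjective.range_comp, h.span_eq]

section Rank

variable [Fintype ι]

theorem finrank_eq_sum (h : IsJordanBasis e U w d) : finrank k U = ∑ i, (d i + 1) := by
  rw [← h.span_eq, finrank_span_eq_card h.linearIndependent]
  simp

theorem finrank_map_eq_sum (h : IsJordanBasis e U w d) : finrank k (U.map e) = ∑ i, d i := by
  let v : (Σ i, Fin (d i)) → V := fun p => (e ^ ((p.2 : ℕ) + 1)) (w p.1)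
  have hv : LinearIndependent k v :=
    h.linearIndependent.comp (Sigma.map id fun i => Fin.succ)
      (Function.injective_id.sigma_map fun i => Fin.succ_injective (d i))
  have hspan : U.map e = Submodule.span k (Set.range v) := by
    rw [← h.span_eq, Submodule.map_span]
    apply le_antisymm <;> rw [Submodule.span_le]
    · rintro _ ⟨_, ⟨⟨i, s, hs⟩, rfl⟩, rfl⟩
      change e ((e ^ s) (w i)) ∈ Submodule.span k (Set.range v)
      rw [← End.mul_apply, ← pow_succ']
      rcases (Nat.lt_succ_iff.1 hs).lt_or_eq with hlt | rfl
      · exact Submodule.subset_span ⟨⟨i, s, hlt⟩, rfl⟩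
      · exact h.pow_apply_eq_zero i ▸ Submodule.zero_mem _
    · rintro _ ⟨⟨i, s⟩, rfl⟩
      refine Submodule.subset_span ⟨_, ⟨⟨i, s.castSucc⟩, rfl⟩, ?_⟩
      simp only [cyclicFamily, v, Fin.val_castSucc, pow_succ', End.mul_apply]
  rw [hspan, finrank_span_eq_card hv]
  simp

theorem card_eq_finrank_ker [FiniteDimensional k V] (h : IsJordanBasis e ⊤ w d) :
    Fintype.card ι = finrank k (LinearMap.ker e) := by
  have hrange : finrank k (LinearMap.range e) = ∑ i, d i := by
    rw [LinearMap.range_eq_map, h.finrank_map_eq_sum]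
  have hdim : finrank k V = ∑ i, d i + Fintype.card ι := by
    rw [← finrank_top, h.finrank_eq_sum, Finset.sum_add_distrib, Finset.sum_const, Finset.card_univ,
      smul_eq_mul, mul_one]
  have hrank := LinearMap.finrank_range_add_finrank_ker e
  omega

end Rank

end IsJordanBasis

namespace IsAdaptedJordanBasis

variable {ι ι' : Type*} {w : ι → V} {d : ι → ℕ} {star : ι → ι}
  {w' : ι' → V} {d' : ι' → ℕ} {star' : ι' → ι'}

theorem mem_invtSubmodule_involution (h : IsAdaptedJordanBasis B σ e U w d star)
    (hσe : SemiconjBy σ e (-e)) : U ∈ σ.invtSubmodule := by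
  rw [End.mem_invtSubmodule]
  nth_rw 1 [← h.span_eq]
  rw [Submodule.span_le]
  rintro _ ⟨⟨i, s, hs⟩, rfl⟩
  have hmem : (e ^ s) (σ (w i)) ∈ U := by
    have hw := h.pow_apply_mem (Nat.lt_succ_iff.1 hs)
    rcases h.eigenvector i with hi | hi <;> rw [hi]
    · exact hw
    · rw [map_neg]
      exact U.neg_mem hw
  change σ ((e ^ s) (w i)) ∈ U
  rw [← End.mul_apply, (hσe.pow_right s).eq, End.mul_apply]
  rcases neg_pow_eq_or_eq_neg e s with hs | hs <;> rw [hs]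
  · exact hmem
  · exact U.neg_mem hmem

theorem sup (hB : B.IsRefl) (hU : IsAdaptedJordanBasis B σ e U w d star)
    (hX : IsAdaptedJordanBasis B σ e X w' d' star') (hUX : Disjoint U X)
    (hort : X ≤ B.orthogonal U) :
    IsAdaptedJordanBasis B σ e (U ⊔ X) (Sum.elim w w') (Sum.elim d d') (Sum.map star star') where
  toIsJordanBasis := hU.toIsJordanBasis.sup hX.toIsJordanBasis hUX
  star_involutive := by
    rintro (i | i)
    · exact congrArg Sum.inl (hU.star_involutive i)
    · exact congrArg Sum.inr (hX.star_involutive i)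
  height_star := Sum.rec hU.height_star hX.height_star
  star_eq_self_iff := by
    rintro (i | i)
    · simpa using hU.star_eq_self_iff i
    · simpa using hX.star_eq_self_iff i
  apply_eq_zero := by
    rintro (i | i) (j | j) hji hj s t hs ht
    · exact hU.apply_eq_zero i j (by simpa using hji) (by simpa using hj) s t hs ht
    · exact hort (hX.pow_apply_mem ht) _ (hU.pow_apply_mem hs)
    · exact hB _ _ (hort (hX.pow_apply_mem hs) _ (hU.pow_apply_mem ht))
    · exact hX.apply_eq_zero i j (by simpa using hji) (by simpa using hj) s t hs ht
  eigenvector := Sum.rec hU.eigenvector hX.eigenvector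

theorem reindex (h : IsAdaptedJordanBasis B σ e U w d star) (E : ι' ≃ ι) :
    IsAdaptedJordanBasis B σ e U (w ∘ E) (d ∘ E) (E.symm ∘ star ∘ E) where
  toIsJordanBasis := h.toIsJordanBasis.reindex E
  star_involutive i := by simp [h.star_involutive (E i)]
  height_star i := by simp [h.height_star]
  star_eq_self_iff i := E.symm_apply_eq.trans (h.star_eq_self_iff (E i))
  apply_eq_zero i j hji hj :=
    h.apply_eq_zero (E i) (E j) (E.injective.ne hji) fun hE => hj (E.eq_symm_apply.2 hE)
  eigenvector i := h.eigenvector (E i)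

end IsAdaptedJordanBasis

theorem hasAdaptedJordanBasis_bot : HasAdaptedJordanBasis B σ e ⊥ :=
  ⟨Empty, inferInstance, Empty.elim, Empty.elim, Empty.elim,
    { pow_apply_eq_zero := by simp
      linearIndependent := linearIndependent_empty_type
      span_eq := by simp
      star_involutive := by simp [Function.Involutive]
      height_star := by simp
      star_eq_self_iff := by simp
      apply_eq_zero := by simp
      eigenvector := by simp }⟩

end JordanBases

section Blocks

variable {k V : Type*} [Field k] [AddCommGroup V] [Module k V]
  {B : LinearMap.BilinForm k V} {σ e : End k V}

section Gram

variable {ι : Type*} [Fintype ι] {w : ι → V} {d : ℕ}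

theorem pow_sub_apply_sum_cyclicFamily (hw : ∀ i, (e ^ (d + 1)) (w i) = 0)
    {a : (Σ _ : ι, Fin (d + 1)) → k} {s : Fin (d + 1)} (ha : ∀ i, ∀ r < s, a ⟨i, r⟩ = 0) :
    (e ^ (d - s)) (∑ p, a p • cyclicFamily e w (fun _ => d) p) =
      ∑ i, a ⟨i, s⟩ • (e ^ d) (w i) := by
  simp only [cyclicFamily, Fintype.sum_sigma, map_sum, map_smul, ← End.mul_apply, ← pow_add]
  refine Finset.sum_congr rfl fun i _ => ?_
  rw [Finset.sum_eq_single s]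
  · rw [Nat.sub_add_cancel (Nat.lt_succ_iff.1 s.2)]
  · intro r _ hrs
    rcases hrs.lt_or_gt with hlt | hgt
    · rw [ha i r hlt, zero_smul]
    · rw [End.pow_map_zero_of_le (by omega : d + 1 ≤ d - s + r) (hw i), smul_zero]
  · simp

theorem eq_zero_of_forall_apply_cyclicFamily_eq_zero (he : B.IsSkewAdjoint e)
    (hw : ∀ i, (e ^ (d + 1)) (w i) = 0) {star : ι → ι}
    (hne : ∀ i, B ((e ^ d) (w i)) (w (star i)) ≠ 0)
    (hoff : ∀ i j, i ≠ j → B ((e ^ d) (w i)) (w (star j)) = 0)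
    (a : (Σ _ : ι, Fin (d + 1)) → k)
    (ha : ∀ q, B (∑ p, a p • cyclicFamily e w (fun _ => d) p)
      (cyclicFamily e w (fun _ => d) q) = 0) : a = 0 := by
  suffices h : ∀ (s : Fin (d + 1)) i, a ⟨i, s⟩ = 0 from funext fun p => h p.2 p.1
  intro s
  induction s using WellFoundedLT.induction with
  | ind s ih =>
  intro j
  have hx :
      B ((e ^ (d - s : ℕ)) (∑ p, a p • cyclicFamily e w (fun _ => d) p)) (w (star j)) = 0 :=
    (pow_apply_eq_zero_iff he _).2 (ha ⟨star j, d - s, by omega⟩)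
  rw [pow_sub_apply_sum_cyclicFamily hw fun i r hr => ih r hr i] at hx
  simp only [map_sum, map_smul, LinearMap.sum_apply, LinearMap.smul_apply, smul_eq_mul] at hx
  rw [Finset.sum_eq_single j (fun i _ hij => by rw [hoff i j hij, mul_zero]) (by simp)] at hx
  exact (mul_eq_zero.1 hx).resolve_right (hne j)

theorem exists_adapted_block_of_pairing {ι : Type} [Finite ι] [Nonempty ι] {w : ι → V}
    {star : ι → ι} {W : Submodule k V} (hB : B.IsRefl) (he : B.IsSkewAdjoint e)
    (hW : W ∈ e.invtSubmodule) (hwW : ∀ i, w i ∈ W) (hσw : ∀ i, σ (w i) = w i ∨ σ (w i) = -w i)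
    (hw : ∀ i, (e ^ (d + 1)) (w i) = 0) (hstar : Function.Involutive star)
    (hodd : ∀ i, star i = i ↔ Odd d) (hcov : ∀ i j, j = i ∨ j = star i)
    (hne : ∀ i, B ((e ^ d) (w i)) (w (star i)) ≠ 0)
    (hoff : ∀ i j, i ≠ j → B ((e ^ d) (w i)) (w (star j)) = 0) :
    ∃ X ≤ W, X ≠ ⊥ ∧ HasAdaptedJordanBasis B σ e X ∧ Disjoint X (B.orthogonal X) := by
  have := Fintype.ofFinite ι
  have hgram := eq_zero_of_forall_apply_cyclicFamily_eq_zero he hw hne hoff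
  refine ⟨_, span_cyclicFamily_le (fun _ => d) hW hwW, ?_,
    ⟨ι, inferInstance, w, fun _ => d, star, ⟨hw, linearIndependent_of_gram hgram, rfl⟩, hstar,
      fun _ => rfl, hodd, fun i j hji hj => ((hcov i j).elim hji hj).elim, hσw⟩,
    disjoint_span_orthogonal_of_gram hB hgram⟩
  obtain ⟨i⟩ := ‹Nonempty ι›
  exact (Submodule.ne_bot_iff _).2 ⟨(e ^ d) (w i), pow_apply_mem_span_cyclicFamily w le_rfl,
    fun h0 => hne i (by rw [h0, map_zero, LinearMap.zero_apply])⟩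

end Gram

theorem exists_pow_ne_zero_of_isNilpotent (he : IsNilpotent e) {W : Submodule k V} (hW : W ≠ ⊥) :
    ∃ d, (∃ x ∈ W, (e ^ d) x ≠ 0) ∧ ∀ x ∈ W, (e ^ (d + 1)) x = 0 := by
  obtain ⟨N, hN⟩ := he
  obtain ⟨d, hd, hd'⟩ :=
    Nat.exists_not_and_succ_of_not_zero_of_exists (p := fun n => ∀ x ∈ W, (e ^ n) x = 0)
      (fun h => hW ((Submodule.eq_bot_iff W).2 h)) ⟨N, fun x _ => by rw [hN, LinearMap.zero_apply]⟩
  push Not at hd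
  exact ⟨d, hd, hd'⟩

variable [NeZero (2 : k)]

section Eigenvectors

variable {C : LinearMap.BilinForm k V} {W : Submodule k V}

theorem exists_eigenvector_apply_self_ne_zero (hC : C.IsSymm) (hσ : Function.Involutive σ)
    (hCσ : ∀ x, C (σ x) (σ x) = C x x) (hW : W ∈ σ.invtSubmodule) {x y : V} (hx : x ∈ W)
    (hy : y ∈ W) (hxy : C x y ≠ 0) : ∃ z ∈ W, (σ z = z ∨ σ z = -z) ∧ C z z ≠ 0 := by
  have hCW : C.restrict W ≠ 0 := fun h => hxy (LinearMap.congr_fun₂ h ⟨x, hx⟩ ⟨y, hy⟩)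
  let : Invertible (2 : k) := invertibleOfNonzero two_ne_zero
  obtain ⟨⟨v, hv⟩, hvv⟩ :=
    LinearMap.BilinForm.exists_bilinForm_self_ne_zero hCW ⟨fun x y => hC.eq x y⟩
  by_contra! h
  have hadd := h (v + σ v) (W.add_mem hv (hW hv)) (Or.inl (by rw [map_add, hσ, add_comm]))
  have hsub := h (v - σ v) (W.sub_mem hv (hW hv)) (Or.inr (by rw [map_sub, hσ, neg_sub]))
  have hfour : 2 * (2 * C v v) = 0 := by
    simp only [map_add, map_sub, LinearMap.add_apply, LinearMap.sub_apply] at hadd hsub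
    linear_combination hadd + hsub - 2 * hCσ v
  exact hvv (by simpa [NeZero.ne (2 : k)] using hfour)

theorem exists_eigenvectors_apply_ne_zero (hσ : Function.Involutive σ)
    (hCσ : ∀ x y, C (σ x) (σ y) = -C x y) (hW : W ∈ σ.invtSubmodule) {x y : V} (hx : x ∈ W)
    (hy : y ∈ W) (hxy : C x y ≠ 0) :
    ∃ u ∈ W, ∃ v ∈ W, (σ u = u ∨ σ u = -u) ∧ (σ v = v ∨ σ v = -v) ∧ C u v ≠ 0 := by
  have hadd (z : V) : σ (z + σ z) = z + σ z := by rw [map_add, hσ, add_comm]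
  have hsub (z : V) : σ (z - σ z) = -(z - σ z) := by rw [map_sub, hσ, neg_sub]
  by_contra! h
  have h₁ := h (x + σ x) (W.add_mem hx (hW hx)) (y - σ y) (W.sub_mem hy (hW hy))
    (Or.inl (hadd x)) (Or.inr (hsub y))
  have h₂ := h (x - σ x) (W.sub_mem hx (hW hx)) (y + σ y) (W.add_mem hy (hW hy))
    (Or.inr (hsub x)) (Or.inl (hadd y))
  have hfour : 2 * (2 * C x y) = 0 := by
    simp only [map_add, map_sub, LinearMap.add_apply, LinearMap.sub_apply] at h₁ h₂
    linear_combination h₁ + h₂ + 2 * hCσ x y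
  exact hxy (by simpa [NeZero.ne (2 : k)] using hfour)

end Eigenvectors

variable {W : Submodule k V} {d : ℕ}

theorem exists_adapted_block_of_odd (hB : B.IsAlt) (hσ : Function.Involutive σ)
    (hσB : B.IsSkewAdjoint σ) (he : B.IsSkewAdjoint e) (hσe : SemiconjBy σ e (-e))
    (hWσ : W ∈ σ.invtSubmodule) (hWe : W ∈ e.invtSubmodule) (hd : Odd d)
    (hWd : ∀ x ∈ W, (e ^ (d + 1)) x = 0) {x y : V} (hx : x ∈ W) (hy : y ∈ W)
    (hxy : B ((e ^ d) x) y ≠ 0) :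
    ∃ X ≤ W, X ≠ ⊥ ∧ HasAdaptedJordanBasis B σ e X ∧ Disjoint X (B.orthogonal X) := by
  have hsymm : LinearMap.BilinForm.IsSymm (B ∘ₗ e ^ d) :=
    ⟨fun x y => by simp [pow_apply_swap hB he d x y, hd.neg_pow]⟩
  obtain ⟨z, hz, hσz, hzz⟩ := exists_eigenvector_apply_self_ne_zero hsymm hσ
    (fun x => pow_apply_involution hB hσ hσB he hσe d x x) hWσ hx hy hxy
  exact exists_adapted_block_of_pairing (w := fun _ : Unit => z) (star := id) hB.isRefl he hWe
    (fun _ => hz) (fun _ => hσz) (fun _ => hWd z hz) (fun _ => rfl) (fun _ => by simpa using hd)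
    (fun _ _ => Or.inl rfl) (fun _ => hzz) (fun i j hij => (hij rfl).elim)

theorem exists_adapted_block_of_even (hB : B.IsAlt) (hσ : Function.Involutive σ)
    (hσB : B.IsSkewAdjoint σ) (he : B.IsSkewAdjoint e) (hσe : SemiconjBy σ e (-e))
    (hWσ : W ∈ σ.invtSubmodule) (hWe : W ∈ e.invtSubmodule) (hd : Even d)
    (hWd : ∀ x ∈ W, (e ^ (d + 1)) x = 0) {x y : V} (hx : x ∈ W) (hy : y ∈ W)
    (hxy : B ((e ^ d) x) y ≠ 0) :
    ∃ X ≤ W, X ≠ ⊥ ∧ HasAdaptedJordanBasis B σ e X ∧ Disjoint X (B.orthogonal X) := by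
  have hswap (x y : V) : B ((e ^ d) y) x = -B ((e ^ d) x) y := by
    rw [pow_apply_swap hB he, hd.neg_pow]
  have hself (x : V) : B ((e ^ d) x) x = 0 := by
    have htwo : 2 * B ((e ^ d) x) x = 0 := by linear_combination hswap x x
    simpa [NeZero.ne (2 : k)] using htwo
  obtain ⟨u, hu, v, hv, hσu, hσv, huv⟩ := exists_eigenvectors_apply_ne_zero (C := B ∘ₗ e ^ d) hσ
    (fun x y => (pow_apply_involution hB hσ hσB he hσe d x y).trans (hswap x y)) hWσ hx hy hxy
  have hvu : B ((e ^ d) v) u ≠ 0 := by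
    rw [hswap u v]
    exact neg_ne_zero.2 huv
  refine exists_adapted_block_of_pairing (w := fun b => bif b then u else v) (star := not)
    hB.isRefl he hWe (Bool.rec hv hu) (Bool.rec hσv hσu) (Bool.rec (hWd v hv) (hWd u hu))
    Bool.not_not (fun b => ?_) (by decide) (Bool.rec hvu huv) ?_
  · simpa using hd
  · rintro (_ | _) (_ | _) hij
    · exact (hij rfl).elim
    · exact hself v
    · exact hself u
    · exact (hij rfl).elim

theorem exists_adapted_block (hB : B.IsAlt) (hσ : Function.Involutive σ)
    (hσB : B.IsSkewAdjoint σ) (he : B.IsSkewAdjoint e) (hσe : SemiconjBy σ e (-e))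
    (hnil : IsNilpotent e) (hWσ : W ∈ σ.invtSubmodule) (hWe : W ∈ e.invtSubmodule)
    (hW : Disjoint W (B.orthogonal W)) (hbot : W ≠ ⊥) :
    ∃ X ≤ W, X ≠ ⊥ ∧ HasAdaptedJordanBasis B σ e X ∧ Disjoint X (B.orthogonal X) := by
  obtain ⟨d, ⟨x, hx, hxd⟩, hWd⟩ := exists_pow_ne_zero_of_isNilpotent hnil hbot
  obtain ⟨y, hy, hxy⟩ := exists_apply_ne_zero_of_disjoint_orthogonal hB.isRefl hW
    (End.pow_apply_mem_of_forall_mem d hWe x hx) hxd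
  rcases d.even_or_odd with hd | hd
  · exact exists_adapted_block_of_even hB hσ hσB he hσe hWσ hWe hd hWd hx hy hxy
  · exact exists_adapted_block_of_odd hB hσ hσB he hσe hWσ hWe hd hWd hx hy hxy

variable [FiniteDimensional k V]

theorem exists_lt_hasAdaptedJordanBasis (hBnd : B.Nondegenerate) (hB : B.IsAlt)
    (hσ : Function.Involutive σ) (hσB : B.IsSkewAdjoint σ) (he : B.IsSkewAdjoint e)
    (hσe : SemiconjBy σ e (-e)) (hnil : IsNilpotent e) {U : Submodule k V}
    (hU : HasAdaptedJordanBasis B σ e U) (hUd : Disjoint U (B.orthogonal U)) (htop : U ≠ ⊤) :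
    ∃ U', U < U' ∧ HasAdaptedJordanBasis B σ e U' ∧ Disjoint U' (B.orthogonal U') := by
  obtain ⟨ι, _, w, d, star, hw⟩ := hU
  have hcompl : IsCompl U (B.orthogonal U) :=
    (LinearMap.BilinForm.isCompl_orthogonal_iff_disjoint hB.isRefl).2 hUd
  have hperp : Disjoint (B.orthogonal U) (B.orthogonal (B.orthogonal U)) := by
    rw [LinearMap.BilinForm.orthogonal_orthogonal hBnd hB.isRefl]
    exact hUd.symm
  have hne : B.orthogonal U ≠ ⊥ := fun h => htop (eq_top_of_isCompl_bot (h ▸ hcompl))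
  obtain ⟨X, hXU, hX, ⟨ι', _, w', d', star', hw'⟩, hXd⟩ := exists_adapted_block hB hσ hσB he hσe
    hnil (orthogonal_mem_invtSubmodule hσB (hw.mem_invtSubmodule_involution hσe))
    (orthogonal_mem_invtSubmodule he hw.mem_invtSubmodule) hperp hne
  have hUX : Disjoint U X := hUd.mono_right hXU
  exact ⟨U ⊔ X, left_lt_sup.2 fun hle => hX (hUX.eq_bot_of_ge hle),
    ⟨ι ⊕ ι', inferInstance, _, _, _, hw.sup hB.isRefl hw' hUX hXU⟩,
    disjoint_sup_orthogonal_sup hXU hUd hXd⟩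

theorem hasAdaptedJordanBasis_top (hBnd : B.Nondegenerate) (hB : B.IsAlt)
    (hσ : Function.Involutive σ) (hσB : B.IsSkewAdjoint σ) (he : B.IsSkewAdjoint e)
    (hσe : SemiconjBy σ e (-e)) (hnil : IsNilpotent e) : HasAdaptedJordanBasis B σ e ⊤ := by
  obtain ⟨U, ⟨hU, hUd⟩, hmax⟩ := exists_maximal_of_wellFoundedGT
    (fun U => HasAdaptedJordanBasis B σ e U ∧ Disjoint U (B.orthogonal U))
    ⟨⊥, hasAdaptedJordanBasis_bot, disjoint_bot_left⟩
  obtain rfl : U = ⊤ := by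
    by_contra htop
    obtain ⟨U', hlt, hU'⟩ :=
      exists_lt_hasAdaptedJordanBasis hBnd hB hσ hσB he hσe hnil hU hUd htop
    exact hlt.not_ge (hmax hU' hlt.le)
  exact hU

end Blocks

section LagrangianDecomposition

variable {R M : Type*} [CommRing R] [AddCommGroup M] [Module R M] {P N : Submodule R M}
  {σ : End R M}

theorem involutive_of_codisjoint (hPN : Codisjoint P N) (hσP : ∀ v ∈ P, σ v = v)
    (hσN : ∀ v ∈ N, σ v = -v) : Function.Involutive σ := by
  intro v
  obtain ⟨a, b, ha, hb, rfl⟩ := Submodule.codisjoint_iff_exists_add_eq.1 hPN v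
  simp [hσP a ha, hσN b hb]

theorem isSkewAdjoint_of_isotropic {B : LinearMap.BilinForm R M} (hPN : Codisjoint P N)
    (hBP : ∀ v ∈ P, ∀ w ∈ P, B v w = 0) (hBN : ∀ v ∈ N, ∀ w ∈ N, B v w = 0)
    (hσP : ∀ v ∈ P, σ v = v) (hσN : ∀ v ∈ N, σ v = -v) : B.IsSkewAdjoint σ := by
  intro v w
  obtain ⟨a, b, ha, hb, rfl⟩ := Submodule.codisjoint_iff_exists_add_eq.1 hPN v
  obtain ⟨a', b', ha', hb', rfl⟩ := Submodule.codisjoint_iff_exists_add_eq.1 hPN w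
  simp [hσP a ha, hσN b hb, hσP a' ha', hσN b' hb', hBP a ha a' ha', hBN b hb b' hb']

end LagrangianDecomposition

theorem adapted_cyclic_vectors_sp_gl_general {k V : Type*} [Field k] [NeZero (2 : k)]
    [AddCommGroup V] [Module k V] [FiniteDimensional k V] (B : LinearMap.BilinForm k V)
    (hBnd : ∀ v, (∀ w, B v w = 0) → v = 0) (hBalt : ∀ v w, B w v = -B v w)
    (Vp Vm : Submodule k V) (hcod : Codisjoint Vp Vm)
    (hisop : ∀ v ∈ Vp, ∀ w ∈ Vp, B v w = 0) (hisom : ∀ v ∈ Vm, ∀ w ∈ Vm, B v w = 0)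
    (σ : End k V) (hσp : ∀ v ∈ Vp, σ v = v) (hσm : ∀ v ∈ Vm, σ v = -v)
    (e : End k V) (hnil : IsNilpotent e) (he : ∀ v w, B (e v) w + B v (e w) = 0)
    (hσe : σ ∘ₗ e ∘ₗ σ = -e) :
    ∃ (w : Fin (finrank k (LinearMap.ker e)) → V) (d : Fin (finrank k (LinearMap.ker e)) → ℕ)
      (star : Fin (finrank k (LinearMap.ker e)) → Fin (finrank k (LinearMap.ker e))),
      IsAdaptedJordanBasis B σ e ⊤ w d star := by
  have hB : B.IsAlt := fun v => by
    have htwo : 2 * B v v = 0 := by linear_combination hBalt v v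
    simpa [NeZero.ne (2 : k)] using htwo
  have hσ : Function.Involutive σ := involutive_of_codisjoint hcod hσp hσm
  have heB : B.IsSkewAdjoint e := fun v w => by
    rw [Pi.neg_apply, map_neg]
    exact eq_neg_of_add_eq_zero_left (he v w)
  have hanti : SemiconjBy σ e (-e) := LinearMap.ext fun v => by
    simpa [hσ v] using LinearMap.congr_fun hσe (σ v)
  obtain ⟨ι, _, w, d, star, h⟩ := hasAdaptedJordanBasis_top
    (hB.isRefl.nondegenerate_iff_separatingLeft.2 hBnd) hB hσ
    (isSkewAdjoint_of_isotropic hcod hisop hisom hσp hσm) heB hanti hnil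
  have := Fintype.ofFinite ι
  let E : Fin (finrank k (LinearMap.ker e)) ≃ ι :=
    (Fintype.equivFinOfCardEq h.card_eq_finrank_ker).symm
  exact ⟨_, _, _, h.reindex E⟩

theorem adapted_cyclic_vectors_sp_gl
    {k V : Type*} [Field k] [IsAlgClosed k] [CharZero k]
    [AddCommGroup V] [Module k V] [FiniteDimensional k V]
    (n : ℕ) (hdim : finrank k V = 2 * n)
    (B : V →ₗ[k] V →ₗ[k] k)
    (hBnd : ∀ v : V, (∀ w : V, B v w = 0) → v = 0)
    (hBalt : ∀ v w : V, B w v = -B v w)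
    (Vp Vm : Submodule k V) (hcompl : IsCompl Vp Vm)
    (hVp : finrank k Vp = n) (hVm : finrank k Vm = n)
    (hisop : ∀ v ∈ Vp, ∀ w ∈ Vp, B v w = 0)
    (hisom : ∀ v ∈ Vm, ∀ w ∈ Vm, B v w = 0)
    (σ : Module.End k V)
    (hσp : ∀ v ∈ Vp, σ v = v) (hσm : ∀ v ∈ Vm, σ v = -v)
    (e : Module.End k V) (hnil : IsNilpotent e)
    (he : ∀ v w : V, B (e v) w + B v (e w) = 0)
    (hσe : σ ∘ₗ e ∘ₗ σ = -e) :
    ∃ (m : ℕ), m = finrank k ↥(LinearMap.ker e) ∧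
    ∃ (w : Fin m → V) (d : Fin m → ℕ) (inv : Fin m → Fin m),
      (∀ i, (e ^ (d i + 1)) (w i) = 0) ∧
      LinearIndependent k
        (fun p : Σ i : Fin m, Fin (d i + 1) => (e ^ (p.2 : ℕ)) (w p.1)) ∧
      Submodule.span k
        (Set.range fun p : Σ i : Fin m, Fin (d i + 1) => (e ^ (p.2 : ℕ)) (w p.1)) = ⊤ ∧
      (∀ i, inv (inv i) = i) ∧
      (∀ i, d (inv i) = d i) ∧
      (∀ i, inv i = i ↔ Odd (d i)) ∧
      (∀ i j : Fin m, j ≠ i → j ≠ inv i → ∀ s t : ℕ, s ≤ d i → t ≤ d j →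
        B ((e ^ s) (w i)) ((e ^ t) (w j)) = 0) ∧
      (∀ i, σ (w i) = w i ∨ σ (w i) = -w i) := by
  obtain ⟨w, d, star, h⟩ := adapted_cyclic_vectors_sp_gl_general B hBnd hBalt Vp Vm
    hcompl.codisjoint hisop hisom σ hσp hσm e hnil he hσe
  exact ⟨_, rfl, w, d, star, h.pow_apply_eq_zero, h.linearIndependent, h.span_eq,
    h.star_involutive, h.height_star, h.star_eq_self_iff, h.apply_eq_zero, h.eigenvector⟩
end
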